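/- Let f : X → S be locally of finite type with S locally Noetherian. The functor Hilb^1_X (of closed sections, equivalently closed subschemes flat and finite of rank one over the base) is representable by a scheme if and only if f is separated; and in the separated case it is represented by X itself. -/

import Mathlib

open AlgebraicGeometry CategoryTheory CategoryTheory.Limits

/-- `h : T ⟶ X` is a closed section of `X ×_S T ⟶ T`:
the induced section `(h, 𝟙 T) : T ⟶ X ×_S T` is a closed immersion. -/
def IsClosedSectionOver {X S T : Scheme} (f : X ⟶ S) (g : T ⟶ S) (h : T ⟶ X) : Prop :=
  ∃ w : h ≫ f = 𝟙 T ≫ g, IsClosedImmersion (pullback.lift h (𝟙 T) w)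

/-- The `T`-valued points of the Hilbert functor of one point of `X` over `S`:
closed sections of `X ×_S T ⟶ T`, identified with the corresponding
`S`-morphisms `T ⟶ X`. -/
def Hilb1Set {X S : Scheme} (f : X ⟶ S) (T : Over S) : Type :=
  {h : T.left ⟶ X // IsClosedSectionOver f T.hom h}

namespace HilbOneAux

/-- A section is an immersion. -/
lemma isImmersion_section {X S T : Scheme.{0}} (f : X ⟶ S) (g : T ⟶ S) (h : T ⟶ X)
    (w : h ≫ f = 𝟙 T ≫ g) : IsImmersion (pullback.lift h (𝟙 T) w) := by
  have : IsImmersion (pullback.lift h (𝟙 T) w ≫ pullback.snd f g) := by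
    rw [pullback.lift_snd]; infer_instance
  exact IsImmersion.of_comp _ (pullback.snd f g)

lemma closedSection_of_subsingleton {X S : Scheme.{0}} (f : X ⟶ S) [LocallyOfFiniteType f]
    (A : CommRingCat.{0}) [Subsingleton (Spec A)] (g : Spec A ⟶ S) (h : Spec A ⟶ X)
    (w : h ≫ f = g) : IsClosedSectionOver f g h := by
  have w' : h ≫ f = 𝟙 _ ≫ g := by simpa using w
  refine ⟨w', ?_⟩
  have := isImmersion_section f g h w'
  have hJ : JacobsonSpace (Spec A) := by
    rw [jacobsonSpace_iff_locallyClosed]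
    rintro Z ⟨z, hz⟩ -
    refine ⟨z, hz, ?_⟩
    rw [mem_closedPoints_iff, Set.eq_univ_of_forall (s := {z}) (fun y => Subsingleton.elim _ _)]
    exact isClosed_univ
  have hJ2 : JacobsonSpace (pullback f g : Scheme.{0}) :=
    LocallyOfFiniteType.jacobsonSpace (pullback.snd f g)
  refine ⟨⟨(pullback.lift h (𝟙 _) w').isEmbedding, ?_⟩⟩
  have hlc := (pullback.lift h (𝟙 _) w').isLocallyClosed_range
  rcases (Set.subsingleton_range (pullback.lift h (𝟙 _) w')).eq_empty_or_singleton with h0 | ⟨y, hy⟩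
  · rw [h0]; exact isClosed_empty
  · rw [hy] at hlc ⊢
    exact isClosed_singleton_of_isLocallyClosed_singleton hlc

lemma separated_of_completions {X S : Scheme.{0}} (f : X ⟶ S) [LocallyOfFiniteType f]
    [IsLocallyNoetherian S]
    (H : ∀ x : X, ∃ (T : Scheme.{0}) (h : T ⟶ X) (t : T), Flat h ∧ h t = x ∧
      IsClosedSectionOver f (h ≫ f) h) : IsSeparated f := by
  have : IsLocallyNoetherian X := LocallyOfFiniteType.isLocallyNoetherian f
  have : IsLocallyNoetherian (pullback f f) :=
    LocallyOfFiniteType.isLocallyNoetherian (pullback.snd f f ≫ f)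
  have : QuasiCompact (pullback.diagonal f) := inferInstance
  have hs : SpecializingMap (pullback.diagonal f) := by
    intro y z hyz
    obtain ⟨T, h, t, hflat, ht, w, hcl⟩ := H (pullback.snd f f z)
    -- the map `X ×_S T ⟶ X ×_S X`
    obtain ⟨q, hq1, hq2⟩ : ∃ q : pullback f (h ≫ f) ⟶ pullback f f,
        q ≫ pullback.fst f f = pullback.fst f (h ≫ f) ∧
        q ≫ pullback.snd f f = pullback.snd f (h ≫ f) ≫ h :=
      ⟨pullback.lift (pullback.fst _ _) (pullback.snd _ _ ≫ h) (by
        rw [Category.assoc]; exact pullback.condition), pullback.lift_fst _ _ _,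
        pullback.lift_snd _ _ _⟩
    have hq : IsPullback q (pullback.snd f (h ≫ f)) (pullback.snd f f) h := by
      refine IsPullback.of_right (h₁₂ := pullback.fst f f) (v₁₃ := f) (h₂₂ := f) ?_ hq2
        (IsPullback.of_hasPullback f f)
      rw [hq1]
      exact IsPullback.of_hasPullback f (h ≫ f)
    have hqf : Flat q := MorphismProperty.of_isPullback (P := @Flat) hq.flip hflat
    obtain ⟨z', hz', -⟩ : ∃ z', q z' = z ∧ pullback.snd f (h ≫ f) z' = t := by
      obtain ⟨a, ha, hb⟩ := Scheme.Pullback.exists_preimage_pullback (f := pullback.snd f f) (g := h)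
        z t ht.symm
      refine ⟨hq.isoPullback.inv a, ?_, ?_⟩
      · rw [← Scheme.Hom.comp_apply, IsPullback.isoPullback_inv_fst, ha]
      · rw [← Scheme.Hom.comp_apply, IsPullback.isoPullback_inv_snd, hb]
    subst hz'
    obtain ⟨d, hd, hd'⟩ := Flat.generalizingMap q hyz
    -- the preimage of the diagonal is the graph
    have hgw : pullback.lift h (𝟙 T) w ≫ q = h ≫ pullback.diagonal f := by
      apply pullback.hom_ext
      · rw [Category.assoc, hq1, pullback.lift_fst, Category.assoc, pullback.diagonal_fst,
          Category.comp_id]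
      · rw [Category.assoc, hq2, pullback.lift_snd_assoc, Category.assoc, pullback.diagonal_snd,
          Category.comp_id, Category.id_comp]
    have hgr : IsPullback (pullback.lift h (𝟙 T) w) h q (pullback.diagonal f) := by
      refine IsPullback.of_right (h₁₂ := pullback.snd f (h ≫ f)) (v₁₃ := h)
        (h₂₂ := pullback.snd f f) ?_ hgw hq.flip
      rw [pullback.lift_snd, pullback.diagonal_snd]
      exact IsPullback.of_horiz_isIso ⟨by simp⟩
    obtain ⟨e, he, -⟩ : ∃ e, pullback.lift h (𝟙 T) w e = d ∧ h e = y := by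
      obtain ⟨a, ha, hb⟩ := Scheme.Pullback.exists_preimage_pullback (f := q)
        (g := pullback.diagonal f) d y hd'
      refine ⟨hgr.isoPullback.inv a, ?_, ?_⟩
      · rw [← Scheme.Hom.comp_apply, IsPullback.isoPullback_inv_fst, ha]
      · rw [← Scheme.Hom.comp_apply, IsPullback.isoPullback_inv_snd, hb]
    have hc : z' ∈ Set.range (pullback.lift h (𝟙 T) w) :=
      hd.mem_closed (pullback.lift h (𝟙 T) w).isClosedEmbedding.isClosed_range ⟨e, he⟩
    obtain ⟨e', he'⟩ := hc
    have hfin : pullback.diagonal f (h e') = q z' := by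
      rw [← he', ← Scheme.Hom.comp_apply, ← Scheme.Hom.comp_apply, hgw]
    refine ⟨h e', ?_, hfin⟩
    change y ⤳ h e'
    rw [← (pullback.diagonal f).isEmbedding.toIsInducing.specializes_iff, hfin]
    exact hyz
  refine ⟨⟨⟨(pullback.diagonal f).isEmbedding, ?_⟩⟩⟩
  exact ((isClosedMap_iff_specializingMap _).mpr hs).isClosed_range

lemma spec_quot_eq_closedPoint (A : CommRingCat.{0}) [IsLocalRing A] (I : Ideal A)
    (hI : I = IsLocalRing.maximalIdeal A) (n : ℕ) (q : Spec (.of (A ⧸ I ^ n))) :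
    Spec.map (CommRingCat.ofHom (Ideal.Quotient.mk (I ^ n))) q = IsLocalRing.closedPoint A := by
  have hle : I ≤ q.asIdeal.comap (Ideal.Quotient.mk (I ^ n)) := by
    have hp : (q.asIdeal.comap (Ideal.Quotient.mk (I ^ n))).IsPrime := q.2.comap _
    refine hp.le_of_pow_le (n := n) ?_
    intro a ha
    rw [Ideal.mem_comap, Ideal.Quotient.eq_zero_iff_mem.mpr ha]
    exact zero_mem _
  apply PrimeSpectrum.ext
  change q.asIdeal.comap (Ideal.Quotient.mk (I ^ n)) = IsLocalRing.maximalIdeal A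
  refine le_antisymm (IsLocalRing.le_maximalIdeal (q.2.comap _).ne_top) ?_
  rwa [← hI]

lemma subsingleton_spec_quot (A : CommRingCat.{0}) [IsLocalRing A] (I : Ideal A)
    (hI : I = IsLocalRing.maximalIdeal A) (n : ℕ) :
    Subsingleton (Spec (.of (A ⧸ I ^ n))) := by
  refine ⟨fun p q => ?_⟩
  refine PrimeSpectrum.comap_injective_of_surjective
    (Ideal.Quotient.mk (I ^ n)) Ideal.Quotient.mk_surjective ?_
  exact (spec_quot_eq_closedPoint A I hI n p).trans (spec_quot_eq_closedPoint A I hI n q).symm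

lemma flat_fromSpecStalk (X : Scheme.{0}) (x : X) : Flat (X.fromSpecStalk x) := by
  obtain ⟨U, hU, hxU, -⟩ := exists_isAffineOpen_mem_and_subset (x := x) (U := ⊤) trivial
  rw [← hU.fromSpecStalk_eq_fromSpecStalk hxU]
  have : Flat (Spec.map (X.presheaf.germ U x hxU)) := by
    rw [Flat.SpecMap_iff]
    let := X.presheaf.algebra_section_stalk ⟨x, hxU⟩
    have := hU.isLocalization_stalk ⟨x, hxU⟩
    exact RingHom.flat_algebraMap_iff.mpr (IsLocalization.flat _ (hU.primeIdealOf ⟨x, hxU⟩).asIdeal.primeCompl)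
  unfold IsAffineOpen.fromSpecStalk
  infer_instance

lemma exists_lift_completion {H X : Scheme.{0}} (u : H ⟶ X) (A : CommRingCat.{0}) [IsLocalRing A]
    (I : Ideal A) (hI : I = IsLocalRing.maximalIdeal A) (c : Spec A ⟶ X)
    (hn : ∀ n : ℕ, Spec (.of (A ⧸ I ^ n)) ⟶ H)
    (hu : ∀ n, hn n ≫ u = Spec.map (CommRingCat.ofHom (Ideal.Quotient.mk (I ^ n))) ≫ c)
    (hc : ∀ {m n : ℕ} (hle : m ≤ n), Spec.map (CommRingCat.ofHom
      (Ideal.Quotient.factorPow I hle)) ≫ hn n = hn m) :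
    ∃ h : Spec (.of (AdicCompletion I A)) ⟶ H,
      h ≫ u = Spec.map (CommRingCat.ofHom (algebraMap A (AdicCompletion I A))) ≫ c := by
  -- the quotient by the first power is nontrivial
  have hnt : Nontrivial (A ⧸ I ^ 1) := by
    rw [pow_one, hI]; infer_instance
  obtain ⟨p₁⟩ : Nonempty (Spec (.of (A ⧸ I ^ 1))) := inferInstanceAs (Nonempty (PrimeSpectrum _))
  let p : H := hn 1 p₁
  have hcp : u p = c (IsLocalRing.closedPoint A) := by
    have := congr($(hu 1) p₁)
    rw [Scheme.Hom.comp_apply, Scheme.Hom.comp_apply] at this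
    rw [spec_quot_eq_closedPoint A I hI] at this
    exact this
  obtain ⟨U, hU, hxU, -⟩ := exists_isAffineOpen_mem_and_subset (x := u p) (U := ⊤) trivial
  obtain ⟨V, hV, hpV, hVU⟩ := exists_isAffineOpen_mem_and_subset (x := p) (U := u ⁻¹ᵁ U) hxU
  have hcU : Set.range c ⊆ Set.range hU.fromSpec := by
    rw [hU.range_fromSpec]
    rintro _ ⟨y, rfl⟩
    refine Specializes.mem_open (y := u p) ?_ U.2 hxU
    rw [hcp]
    exact (IsLocalRing.specializes_closedPoint y).map c.continuous
  have hnV : ∀ n, Set.range (hn n) ⊆ Set.range hV.fromSpec := by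
    intro n
    rw [hV.range_fromSpec]
    rintro _ ⟨y, rfl⟩
    rcases Nat.eq_zero_or_pos n with rfl | hpos
    · have : Subsingleton (A ⧸ I ^ 0) := Ideal.Quotient.subsingleton_iff.mpr (by simp)
      have : IsEmpty (Spec (.of (A ⧸ I ^ 0))) := inferInstanceAs (IsEmpty (PrimeSpectrum _))
      exact isEmptyElim y
    · have := hc (show 1 ≤ n from hpos)
      have h2 := congr($(this) p₁)
      rw [Scheme.Hom.comp_apply] at h2
      have hsub := subsingleton_spec_quot A I hI n
      rw [Subsingleton.elim y (Spec.map (CommRingCat.ofHom (Ideal.Quotient.factorPow I hpos)) p₁)]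
      exact h2 ▸ hpV
  have hgU : Set.range (hV.fromSpec ≫ u) ⊆ Set.range hU.fromSpec := by
    rw [hU.range_fromSpec]
    rintro _ ⟨y, rfl⟩
    rw [Scheme.Hom.comp_apply]
    apply hVU
    have : hV.fromSpec y ∈ Set.range hV.fromSpec := ⟨y, rfl⟩
    rwa [hV.range_fromSpec] at this
  obtain ⟨γ, hγ⟩ : ∃ γ, Spec.map γ ≫ hU.fromSpec = c :=
    ⟨Spec.preimage (IsOpenImmersion.lift hU.fromSpec c hcU), by simp⟩
  obtain ⟨ψ, hψ⟩ : ∃ ψ, Spec.map ψ ≫ hU.fromSpec = hV.fromSpec ≫ u :=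
    ⟨Spec.preimage (IsOpenImmersion.lift hU.fromSpec _ hgU), by simp⟩
  have hφ' : ∀ n, ∃ φ, Spec.map φ ≫ hV.fromSpec = hn n := fun n =>
    ⟨Spec.preimage (IsOpenImmersion.lift hV.fromSpec _ (hnV n)), by simp⟩
  choose φ hφ using hφ'
  have hcomp : ∀ {m n : ℕ} (hle : m ≤ n),
      (Ideal.Quotient.factorPow I hle).comp (φ n).hom = (φ m).hom := by
    intro m n hle
    have : φ n ≫ CommRingCat.ofHom (Ideal.Quotient.factorPow I hle) = φ m := by
      apply Spec.map_injective
      rw [← cancel_mono hV.fromSpec, Spec.map_comp, Category.assoc, hφ, hφ, hc]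
    rw [← this]; rfl
  have hred : ∀ n, ψ ≫ φ n = γ ≫ CommRingCat.ofHom (Ideal.Quotient.mk (I ^ n)) := by
    intro n
    apply Spec.map_injective
    rw [← cancel_mono hU.fromSpec, Spec.map_comp, Category.assoc, hψ, ← Category.assoc, hφ, hu,
      Spec.map_comp, Category.assoc, hγ]
  let Φ : Γ(H, V) ⟶ .of (AdicCompletion I A) :=
    CommRingCat.ofHom (AdicCompletion.liftRingHom I (fun n => (φ n).hom) hcomp)
  have hΦ : ψ ≫ Φ = γ ≫ CommRingCat.ofHom (algebraMap _ _) := by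
    apply CommRingCat.hom_ext
    apply RingHom.ext
    intro a
    apply AdicCompletion.ext_evalₐ
    intro n
    have := congr($(hred n) a)
    simpa [Φ, AdicCompletion.algebraMap_apply] using this
  refine ⟨Spec.map Φ ≫ hV.fromSpec, ?_⟩
  rw [Category.assoc, ← hψ, ← Spec.map_comp_assoc, hΦ, Spec.map_comp_assoc, hγ]

end HilbOneAux

/-- For `f : X ⟶ S` locally of finite type with `S` locally Noetherian, the Hilbert
functor `Hilb¹_X` is representable by a scheme if and only if `f` is separated, and in
the separated case it is represented by `X` itself. -/
theorem hilbOne_representable_iff_separated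
    {X S : Scheme} (f : X ⟶ S) [LocallyOfFiniteType f] [IsLocallyNoetherian S] :
    ((∃ (H : Over S) (e : ∀ T : Over S, (T ⟶ H) ≃ Hilb1Set f T),
        ∀ (T T' : Over S) (u : T' ⟶ T) (k : T ⟶ H),
          ((e T') (u ≫ k)).1 = u.left ≫ ((e T) k).1) ↔ IsSeparated f) ∧
    (IsSeparated f →
      ∃ e : ∀ T : Over S, (T ⟶ Over.mk f) ≃ Hilb1Set f T,
        ∀ (T T' : Over S) (u : T' ⟶ T) (k : T ⟶ Over.mk f),
          ((e T') (u ≫ k)).1 = u.left ≫ ((e T) k).1) := by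
  have hsep : IsSeparated f →
      ∃ e : ∀ T : Over S, (T ⟶ Over.mk f) ≃ Hilb1Set f T,
        ∀ (T T' : Over S) (u : T' ⟶ T) (k : T ⟶ Over.mk f),
          ((e T') (u ≫ k)).1 = u.left ≫ ((e T) k).1 := by
    intro hf
    refine ⟨fun T => ⟨fun k => ⟨k.left, ?_, ?_⟩, fun h => Over.homMk h.1 ?_, ?_, ?_⟩, ?_⟩
    · simpa using Over.w k
    · have : IsClosedImmersion (pullback.lift k.left (𝟙 T.left) (by simpa using Over.w k) ≫
          pullback.snd f T.hom) := by
        rw [pullback.lift_snd]; infer_instance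
      exact IsClosedImmersion.of_comp _ (pullback.snd f T.hom)
    · obtain ⟨w, -⟩ := h.2
      simpa using w
    · intro k; ext; rfl
    · intro h; rfl
    · intros; rfl
  refine ⟨⟨?_, fun h => ⟨Over.mk f, hsep h⟩⟩, hsep⟩
  rintro ⟨H, e, he⟩
  have : IsLocallyNoetherian X := LocallyOfFiniteType.isLocallyNoetherian f
  let u : H.left ⟶ X := (e H (𝟙 H)).1
  have key : ∀ (T : Over S) (k : T ⟶ H), (e T k).1 = k.left ≫ u := fun T k => by
    simpa using he _ _ k (𝟙 H)
  have huf : u ≫ f = H.hom := by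
    obtain ⟨w, -⟩ := (e H (𝟙 H)).2
    simpa using w
  refine HilbOneAux.separated_of_completions f fun x => ?_
  let A := X.presheaf.stalk x
  let c : Spec A ⟶ X := X.fromSpecStalk x
  let I := IsLocalRing.maximalIdeal A
  let Tn : ℕ → Over S := fun n => Over.mk
    (Spec.map (CommRingCat.ofHom (Ideal.Quotient.mk (I ^ n))) ≫ c ≫ f)
  have hsub : ∀ n, Subsingleton (Spec (.of (A ⧸ I ^ n))) :=
    HilbOneAux.subsingleton_spec_quot A I rfl
  let pt : ∀ n, Hilb1Set f (Tn n) := fun n =>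
    ⟨Spec.map (CommRingCat.ofHom (Ideal.Quotient.mk (I ^ n))) ≫ c, by
      have := hsub n
      exact HilbOneAux.closedSection_of_subsingleton f (.of (A ⧸ I ^ n)) _ _ (by simp [Tn])⟩
  have hpt : ∀ n, ((e (Tn n)).symm (pt n)).left ≫ u =
      Spec.map (CommRingCat.ofHom (Ideal.Quotient.mk (I ^ n))) ≫ c := by
    intro n
    rw [← key, Equiv.apply_symm_apply]
  obtain ⟨h, hh⟩ := HilbOneAux.exists_lift_completion u A I rfl c
    (fun n => ((e (Tn n)).symm (pt n)).left) hpt (by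
      intro m n hle
      let v : Tn m ⟶ Tn n := Over.homMk (Spec.map (CommRingCat.ofHom
        (Ideal.Quotient.factorPow I hle))) (by
          simp only [Tn, Over.mk_hom, ← Spec.map_comp_assoc]; rfl)
      have : v ≫ (e (Tn n)).symm (pt n) = (e (Tn m)).symm (pt m) := by
        apply (e (Tn m)).injective
        apply Subtype.ext
        rw [he, Equiv.apply_symm_apply, Equiv.apply_symm_apply]
        simp only [v, pt, Over.homMk_left, ← Spec.map_comp_assoc]; rfl
      exact congr($(this).left))
  let T : Over S := Over.mk ((h ≫ u) ≫ f)
  have hcl := (e T (Over.homMk h (by simp [T, huf]))).2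
  rw [key] at hcl
  have : Nontrivial (A ⧸ I ^ 1) := by
    rw [pow_one]; infer_instance
  obtain ⟨p₁⟩ : Nonempty (Spec (.of (A ⧸ I ^ 1))) := inferInstanceAs (Nonempty (PrimeSpectrum _))
  refine ⟨_, h ≫ u, Spec.map (CommRingCat.ofHom (AdicCompletion.evalₐ I 1).toRingHom) p₁,
    ?_, ?_, hcl⟩
  · rw [hh]
    have h1 : Flat (Spec.map (CommRingCat.ofHom (algebraMap A (AdicCompletion I A)))) := by
      rw [Flat.SpecMap_iff]
      exact RingHom.flat_algebraMap_iff.mpr inferInstance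
    have h2 := HilbOneAux.flat_fromSpecStalk X x
    infer_instance
  · have : CommRingCat.ofHom (algebraMap A (AdicCompletion I A)) ≫
        CommRingCat.ofHom (AdicCompletion.evalₐ I 1).toRingHom =
        CommRingCat.ofHom (Ideal.Quotient.mk (I ^ 1)) := by
      ext a
      simp
    rw [hh, ← Scheme.Hom.comp_apply, ← Spec.map_comp_assoc, this, Scheme.Hom.comp_apply,
      HilbOneAux.spec_quot_eq_closedPoint A I rfl]
    exact Scheme.fromSpecStalk_closedPoint
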